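/- arXiv:2110.05682 — 2 statements merged into one kernel-verified Lean document; each statement's English description precedes it below -/
import Mathlib

section
/- (Weighted-regret bound for stabilized online mirror descent.) Let T ≥ 1, let η₁, …, η_{T+1} > 0, let w₁, …, w_{T+1} > 0, and suppose β_i := (η_{i+1}·w_i)/(η_i·w_{i+1}) ∈ (0, 1] for every i ∈ [T]. Let l̂₁, …, l̂_T ∈ ℝ^A have nonnegative entries. Let θ₁ ∈ Δ(A) have strictly positive entries, and for i = 1, …, T define recursively: θ̃_{i+1}(a) = θ_i(a)·exp(−η_i·l̂_i(a)) for each a; θ'_{i+1} is a minimizer of u ↦ D_F(u, θ̃_{i+1}) over Δ(A); and θ_{i+1} = β_i·θ'_{i+1} + (1 − β_i)·θ₁. Then for every θ ∈ Δ(A) and every t ∈ [T]: Σ_{i=1}^t w_i·⟨θ_i − θ, l̂_i⟩ ≤ (w_{t+1}/η_{t+1})·D_F(θ, θ₁) + Σ_{i=1}^t (w_i/η_i)·D_F(θ_i, θ̃_{i+1}). -/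
open Finset Real

/-- The Bregman divergence of the unnormalized negentropy regularizer
`F(θ) = Σ_a (θ a * log (θ a) - θ a)`, namely
`D_F(u,v) = Σ_a u a * log (u a / v a) - Σ_a u a + Σ_a v a`
(extended to nonnegative `u` by the convention `0 * log 0 = 0`,
which holds automatically since `Real.log 0 = 0`). -/
noncomputable def DF {A : ℕ} (u v : Fin A → ℝ) : ℝ :=
  (∑ a, u a * Real.log (u a / v a)) - (∑ a, u a) + ∑ a, v a

/-- The probability simplex `Δ(A)`. -/
def simplex (A : ℕ) : Set (Fin A → ℝ) :=
  {θ | (∀ a, 0 ≤ θ a) ∧ (∑ a, θ a) = 1}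

theorem aux_term (p q : ℝ) (hq : 0 < q) :
    p * Real.log (p / q) - p + q = q * InformationTheory.klFun (p / q) := by
  unfold InformationTheory.klFun
  field_simp
  ring

theorem DF_eq {A : ℕ} (p q : Fin A → ℝ) (hq : ∀ a, 0 < q a) :
    DF p q = ∑ a, q a * InformationTheory.klFun (p a / q a) := by
  unfold DF
  rw [← Finset.sum_sub_distrib, ← Finset.sum_add_distrib]
  exact Finset.sum_congr rfl fun a _ => aux_term _ _ (hq a)

theorem DF_nonneg' {A : ℕ} (p q : Fin A → ℝ) (hp : ∀ a, 0 ≤ p a) (hq : ∀ a, 0 < q a) :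
    0 ≤ DF p q := by
  rw [DF_eq p q hq]
  exact Finset.sum_nonneg fun a _ => mul_nonneg (hq a).le
    (InformationTheory.klFun_nonneg (div_nonneg (hp a) (hq a).le))

theorem DF_eq_of_nonpos {A : ℕ} (p q : Fin A → ℝ) (hp : ∀ a, 0 ≤ p a) (hq : ∀ a, 0 < q a)
    (h : DF p q ≤ 0) : p = q := by
  have h0 : DF p q = 0 := le_antisymm h (DF_nonneg' p q hp hq)
  rw [DF_eq p q hq, Finset.sum_eq_zero_iff_of_nonneg (fun a _ => mul_nonneg (hq a).le
    (InformationTheory.klFun_nonneg (div_nonneg (hp a) (hq a).le)))] at h0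
  funext a
  have h1 := h0 a (Finset.mem_univ a)
  rcases mul_eq_zero.1 h1 with h2 | h2
  · exact absurd h2 (hq a).ne'
  · rw [InformationTheory.klFun_eq_zero_iff (div_nonneg (hp a) (hq a).le)] at h2
    exact (div_eq_one_iff_eq (hq a).ne').1 h2

theorem DF_self {A : ℕ} (q : Fin A → ℝ) (hq : ∀ a, 0 < q a) : DF q q = 0 := by
  rw [DF_eq q q hq]
  exact Finset.sum_eq_zero fun a _ => by
    rw [div_self (hq a).ne', InformationTheory.klFun_one, mul_zero]

theorem DF_scale {A : ℕ} (p v : Fin A → ℝ) (hp : p ∈ simplex A) (hv : ∀ a, 0 < v a)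
    (hS : 0 < ∑ a, v a) :
    DF p (fun a => v a / ∑ b, v b) = DF p v + Real.log (∑ a, v a) - (∑ a, v a) + 1 := by
  set S := ∑ a, v a with hSd
  have h1 : ∀ a, p a * Real.log (p a / (v a / S)) =
      p a * Real.log (p a / v a) + p a * Real.log S := by
    intro a
    rcases (hp.1 a).eq_or_lt with h | h
    · rw [← h]; simp
    · rw [Real.log_div h.ne' (div_pos (hv a) hS).ne', Real.log_div (hv a).ne' hS.ne',
        Real.log_div h.ne' (hv a).ne']
      ring
  unfold DF
  simp only [h1]
  rw [Finset.sum_add_distrib, ← Finset.sum_mul, ← Finset.sum_div, ← hSd, div_self hS.ne', hp.2]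
  ring

theorem min_eq {A : ℕ} (p v : Fin A → ℝ) (hp : p ∈ simplex A) (hv : ∀ a, 0 < v a)
    (hS : 0 < ∑ a, v a) (hmin : ∀ u ∈ simplex A, DF p v ≤ DF u v) :
    p = fun a => v a / ∑ b, v b := by
  have hq : ∀ a, 0 < v a / ∑ b, v b := fun a => div_pos (hv a) hS
  have hqs : (fun a => v a / ∑ b, v b) ∈ simplex A :=
    ⟨fun a => (hq a).le, by rw [← Finset.sum_div, div_self hS.ne']⟩
  apply DF_eq_of_nonpos _ _ hp.1 hq
  have h1 := DF_scale p v hp hv hS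
  have h2 := DF_scale _ v hqs hv hS
  rw [DF_self _ hq] at h2
  have := hmin _ hqs
  linarith

theorem DF_convex {A : ℕ} (u x y : Fin A → ℝ) (hu : ∀ a, 0 ≤ u a) (hx : ∀ a, 0 < x a)
    (hy : ∀ a, 0 < y a) (b : ℝ) (hb : 0 < b) (hb1 : b ≤ 1) :
    DF u (b • x + (1 - b) • y) ≤ b * DF u x + (1 - b) * DF u y := by
  unfold DF
  simp only [Pi.add_apply, Pi.smul_apply, smul_eq_mul, Finset.sum_add_distrib, ← Finset.mul_sum]
  have : ∑ a, u a * Real.log (u a / (b * x a + (1 - b) * y a)) ≤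
      b * ∑ a, u a * Real.log (u a / x a) + (1 - b) * ∑ a, u a * Real.log (u a / y a) := by
    rw [Finset.mul_sum, Finset.mul_sum, ← Finset.sum_add_distrib]
    apply Finset.sum_le_sum
    intro a _
    rcases (hu a).eq_or_lt with h | h
    · rw [← h]; simp
    · have hz : 0 < b * x a + (1 - b) * y a :=
        add_pos_of_pos_of_nonneg (mul_pos hb (hx a)) (mul_nonneg (by linarith) (hy a).le)
      rw [Real.log_div h.ne' hz.ne', Real.log_div h.ne' (hx a).ne', Real.log_div h.ne' (hy a).ne']
      have hc := strictConcaveOn_log_Ioi.concaveOn.2 (Set.mem_Ioi.2 (hx a)) (Set.mem_Ioi.2 (hy a))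
        hb.le (by linarith : 0 ≤ 1 - b) (by ring)
      simp only [smul_eq_mul] at hc
      nlinarith [mul_le_mul_of_nonneg_left hc h.le]
  linarith

theorem three_point {A : ℕ} (u x v l : Fin A → ℝ) (e : ℝ) (hu : ∀ a, 0 ≤ u a)
    (hx : ∀ a, 0 < x a) (hv : ∀ a, v a = x a * Real.exp (-e * l a))
    (hs : ∑ a, u a = ∑ a, x a) :
    e * ∑ a, (x a - u a) * l a = DF u x - DF u v + DF x v := by
  have h1 : ∀ y : Fin A → ℝ, (∀ a, 0 ≤ y a) → ∀ a,
      y a * Real.log (y a / v a) = y a * Real.log (y a / x a) + e * (y a * l a) := by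
    intro y hy a
    rcases (hy a).eq_or_lt with h | h
    · rw [← h]; simp
    · rw [hv, Real.log_div h.ne' (mul_pos (hx a) (Real.exp_pos _)).ne',
        Real.log_mul (hx a).ne' (Real.exp_pos _).ne', Real.log_exp, Real.log_div h.ne' (hx a).ne']
      ring
  have h2 := DF_self x hx
  unfold DF at *
  simp only [h1 u hu, h1 x (fun a => (hx a).le), sub_mul, Finset.sum_sub_distrib,
    Finset.sum_add_distrib, ← Finset.mul_sum]
  linarith

/-- Weighted-regret bound for stabilized online mirror descent. -/
theorem stmt10 (A : ℕ) (hA : 1 ≤ A) (T : ℕ) (hT : 1 ≤ T)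
    (η w : ℕ → ℝ)
    (hη : ∀ i ∈ Finset.Icc 1 (T + 1), 0 < η i)
    (hw : ∀ i ∈ Finset.Icc 1 (T + 1), 0 < w i)
    (hβ : ∀ i ∈ Finset.Icc 1 T,
      0 < η (i + 1) * w i / (η i * w (i + 1)) ∧ η (i + 1) * w i / (η i * w (i + 1)) ≤ 1)
    (lhat : ℕ → Fin A → ℝ) (hl : ∀ i ∈ Finset.Icc 1 T, ∀ a, 0 ≤ lhat i a)
    (θ θtil θ' : ℕ → Fin A → ℝ)
    (hθ1 : θ 1 ∈ simplex A) (hθ1pos : ∀ a, 0 < θ 1 a)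
    (hθtil : ∀ i ∈ Finset.Icc 1 T, ∀ a,
      θtil (i + 1) a = θ i a * Real.exp (-(η i) * lhat i a))
    (hθ' : ∀ i ∈ Finset.Icc 1 T, θ' (i + 1) ∈ simplex A ∧
      ∀ u ∈ simplex A, DF (θ' (i + 1)) (θtil (i + 1)) ≤ DF u (θtil (i + 1)))
    (hθrec : ∀ i ∈ Finset.Icc 1 T,
      θ (i + 1) = (η (i + 1) * w i / (η i * w (i + 1))) • θ' (i + 1)
        + (1 - η (i + 1) * w i / (η i * w (i + 1))) • θ 1) :
    ∀ θs ∈ simplex A, ∀ t ∈ Finset.Icc 1 T,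
      (∑ i ∈ Finset.Icc 1 t, w i * ∑ a, (θ i a - θs a) * lhat i a) ≤
        (w (t + 1) / η (t + 1)) * DF θs (θ 1)
          + ∑ i ∈ Finset.Icc 1 t, (w i / η i) * DF (θ i) (θtil (i + 1)) := by
  intro θs hs t ht
  have key : ∀ t, t ≤ T → (∀ a, 0 < θ (t + 1) a) ∧ (∑ a, θ (t + 1) a) = 1 ∧
      (∑ i ∈ Finset.Icc 1 t, w i * ∑ a, (θ i a - θs a) * lhat i a) ≤
        (w (t + 1) / η (t + 1)) * DF θs (θ 1) - (w (t + 1) / η (t + 1)) * DF θs (θ (t + 1))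
          + ∑ i ∈ Finset.Icc 1 t, (w i / η i) * DF (θ i) (θtil (i + 1)) := by
    intro t
    induction t with
    | zero => intro _; exact ⟨hθ1pos, hθ1.2, by simp⟩
    | succ k ih =>
      intro hk
      obtain ⟨hpos, hsum, hreg⟩ := ih (by omega)
      have hm : k + 1 ∈ Finset.Icc 1 T := Finset.mem_Icc.2 ⟨by omega, hk⟩
      have he := hη (k + 1) (Finset.mem_Icc.2 ⟨by omega, by omega⟩)
      have he' := hη (k + 1 + 1) (Finset.mem_Icc.2 ⟨by omega, by omega⟩)
      have hw1 := hw (k + 1) (Finset.mem_Icc.2 ⟨by omega, by omega⟩)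
      have hw2 := hw (k + 1 + 1) (Finset.mem_Icc.2 ⟨by omega, by omega⟩)
      obtain ⟨hb, hb1⟩ := hβ (k + 1) hm
      have hrec := hθrec (k + 1) hm
      obtain ⟨hp, hmin⟩ := hθ' (k + 1) hm
      have htil := hθtil (k + 1) hm
      have hbW : w (k + 1 + 1) / η (k + 1 + 1) *
          (η (k + 1 + 1) * w (k + 1) / (η (k + 1) * w (k + 1 + 1))) = w (k + 1) / η (k + 1) := by
        field_simp
      set b := η (k + 1 + 1) * w (k + 1) / (η (k + 1) * w (k + 1 + 1)) with hbd
      have hv : ∀ a, 0 < θtil (k + 1 + 1) a := fun a => by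
        rw [htil]; exact mul_pos (hpos a) (Real.exp_pos _)
      have hS : 0 < ∑ a, θtil (k + 1 + 1) a :=
        Finset.sum_pos (fun a _ => hv a) ⟨⟨0, hA⟩, Finset.mem_univ _⟩
      have hpe := min_eq _ _ hp hv hS hmin
      have hppos : ∀ a, 0 < θ' (k + 1 + 1) a := fun a => by
        rw [hpe]; exact div_pos (hv a) hS
      have hD : DF θs (θ' (k + 1 + 1)) ≤ DF θs (θtil (k + 1 + 1)) := by
        rw [hpe, DF_scale θs _ hs hv hS]
        linarith [Real.log_le_sub_one_of_pos hS]
      have hcv := DF_convex θs _ _ hs.1 hppos hθ1pos b hb hb1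
      rw [← hrec] at hcv
      have h3 := three_point θs (θ (k + 1)) (θtil (k + 1 + 1)) (lhat (k + 1)) (η (k + 1))
        hs.1 hpos htil (by rw [hs.2, hsum])
      refine ⟨?_, ?_, ?_⟩
      · intro a
        rw [hrec]
        simp only [Pi.add_apply, Pi.smul_apply, smul_eq_mul]
        exact add_pos_of_pos_of_nonneg (mul_pos hb (hppos a))
          (mul_nonneg (by linarith) (hθ1pos a).le)
      · rw [hrec]
        simp only [Pi.add_apply, Pi.smul_apply, smul_eq_mul, Finset.sum_add_distrib,
          ← Finset.mul_sum]
        rw [hp.2, hθ1.2]; ring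
      · rw [Finset.sum_Icc_succ_top (by omega), Finset.sum_Icc_succ_top (by omega)]
        have h4 : w (k + 1) * ∑ a, (θ (k + 1) a - θs a) * lhat (k + 1) a =
            w (k + 1) / η (k + 1) * (DF θs (θ (k + 1)) - DF θs (θtil (k + 1 + 1))
              + DF (θ (k + 1)) (θtil (k + 1 + 1))) := by
          rw [← h3]; field_simp
        rw [h4]
        have hW1 : 0 < w (k + 1) / η (k + 1) := div_pos hw1 he
        have hW2 : 0 < w (k + 1 + 1) / η (k + 1 + 1) := div_pos hw2 he'
        have h5 := mul_le_mul_of_nonneg_left hcv hW2.le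
        have h6 := mul_le_mul_of_nonneg_left hD hW1.le
        have h7 : w (k + 1 + 1) / η (k + 1 + 1) * (b * DF θs (θ' (k + 1 + 1))
            + (1 - b) * DF θs (θ 1)) = w (k + 1) / η (k + 1) * DF θs (θ' (k + 1 + 1))
            + (w (k + 1 + 1) / η (k + 1 + 1) - w (k + 1) / η (k + 1)) * DF θs (θ 1) := by
          rw [← hbW]; ring
        rw [h7] at h5
        linarith
  have htT := (Finset.mem_Icc.1 ht).2
  obtain ⟨hpos, _, hreg⟩ := key t htT
  have hm : t + 1 ∈ Finset.Icc 1 (T + 1) := Finset.mem_Icc.2 ⟨by omega, by omega⟩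
  have := mul_nonneg (div_pos (hw _ hm) (hη _ hm)).le (DF_nonneg' θs _ hs.1 hpos)
  linarith
end

section
/- (Deterministic core of the high-probability OMD regret bound.) Let T ≥ 1, let η₁, …, η_{T+1} > 0, let w₁, …, w_{T+1} > 0, and suppose β_i := (η_{i+1}·w_i)/(η_i·w_{i+1}) ∈ (0, 1] for every i ∈ [T]. Let θ₁ = (1/A, …, 1/A) be the uniform distribution, and for i = 1, …, T define recursively: θ̃_{i+1}(a) = θ_i(a)·exp(−η_i·l̂_i(a)); θ'_{i+1} is a minimizer of u ↦ D_F(u, θ̃_{i+1}) over Δ(A); and θ_{i+1} = β_i·θ'_{i+1} + (1 − β_i)·θ₁. Assume each l̂_i ∈ ℝ^A has nonnegative entries, is supported on a single coordinate a_i, and satisfies θ_i(a_i)·l̂_i(a_i) ≤ 1. Then for every θ ∈ Δ(A) and every t ∈ [T]: Σ_{i=1}^t w_i·⟨θ_i − θ, l̂_i⟩ ≤ (w_{t+1}·log A)/η_{t+1} + (1/2)·Σ_{i=1}^t η_i·w_i·Σ_a l̂_i(a). -/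
open Finset Real

lemma aux_exp (x : ℝ) (hx : 0 ≤ x) : Real.exp (-x) ≤ 1 - x + x ^ 2 / 2 := by
  have h := Real.quadratic_le_exp_of_nonneg hx
  have hpos : 0 < 1 - x + x ^ 2 / 2 := by nlinarith [sq_nonneg (x - 1)]
  have h1 : 1 ≤ (1 - x + x ^ 2 / 2) * Real.exp x := by
    have : (1 - x + x ^ 2 / 2) * (1 + x + x ^ 2 / 2) ≤ (1 - x + x ^ 2 / 2) * Real.exp x :=
      mul_le_mul_of_nonneg_left h hpos.le
    nlinarith [sq_nonneg (x ^ 2)]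
  rw [Real.exp_neg, inv_eq_one_div, div_le_iff₀ (Real.exp_pos x)]
  exact h1

lemma aux_DF {A : ℕ} (u v : Fin A → ℝ) (hv : ∀ a, 0 < v a) :
    DF u v = ∑ a, v a * InformationTheory.klFun (u a / v a) := by
  unfold DF
  rw [← Finset.sum_sub_distrib, ← Finset.sum_add_distrib]
  refine Finset.sum_congr rfl fun a _ => ?_
  have := (hv a).ne'
  rw [InformationTheory.klFun_apply]
  field_simp
  ring

lemma aux_min {A : ℕ} (q v : Fin A → ℝ) (hv : ∀ a, 0 < v a) (hZ : 0 < ∑ a, v a)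
    (hq : q ∈ simplex A) (hmin : ∀ u ∈ simplex A, DF q v ≤ DF u v) (a : Fin A) :
    q a = v a / ∑ b, v b := by
  set Z := ∑ b, v b with hZdef
  set p : Fin A → ℝ := fun a => v a / Z with hp
  have hppos : ∀ a, 0 < p a := fun a => div_pos (hv a) hZ
  have hpsum : ∑ a, p a = 1 := by
    simp only [hp]
    rw [← Finset.sum_div, ← hZdef, div_self hZ.ne']
  have key : ∀ u ∈ simplex A, DF u v = DF u p - Real.log Z - 1 + Z := by
    intro u hu
    have : ∀ a, u a * Real.log (u a / v a) = u a * Real.log (u a / p a) - u a * Real.log Z := by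
      intro a
      rcases (hu.1 a).eq_or_lt with h | h
      · simp [← h]
      · have : u a / p a = u a / v a * Z := by
          simp only [hp]
          have := (hv a).ne'
          field_simp
        rw [this, Real.log_mul (div_pos h (hv a)).ne' hZ.ne']
        ring
    unfold DF
    rw [Finset.sum_congr rfl (fun a _ => this a), Finset.sum_sub_distrib, ← Finset.sum_mul, hu.2,
      hpsum, ← hZdef]
    ring
  have hpm : p ∈ simplex A := ⟨fun a => (hppos a).le, hpsum⟩
  have h1 := hmin p hpm
  rw [key q hq, key p hpm] at h1
  have h2 : DF p p = 0 := by
    rw [aux_DF p p hppos]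
    refine Finset.sum_eq_zero fun a _ => ?_
    rw [div_self (hppos a).ne']
    simp [InformationTheory.klFun_apply]
  have h3 : DF q p ≤ 0 := by linarith
  rw [aux_DF q p hppos] at h3
  have hnn : ∀ a ∈ (Finset.univ : Finset (Fin A)),
      0 ≤ p a * InformationTheory.klFun (q a / p a) := fun a _ =>
    mul_nonneg (hppos a).le
      (InformationTheory.klFun_nonneg (div_nonneg (hq.1 a) (hppos a).le))
  have h4 := (Finset.sum_eq_zero_iff_of_nonneg hnn).1 (le_antisymm h3 (Finset.sum_nonneg hnn)) a
    (Finset.mem_univ a)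
  have h5 : InformationTheory.klFun (q a / p a) = 0 :=
    (mul_eq_zero.1 h4).resolve_left (hppos a).ne'
  rw [InformationTheory.klFun_eq_zero_iff (div_nonneg (hq.1 a) (hppos a).le)] at h5
  exact (div_eq_one_iff_eq (hppos a).ne').1 h5

/-- one OMD step -/
lemma aux_step {A : ℕ} (x y v q l s : Fin A → ℝ) (e β : ℝ) (he : 0 < e) (hA : 1 ≤ A)
    (hβ0 : 0 < β) (hβ1 : β ≤ 1) (hl : ∀ a, 0 ≤ l a)
    (hx : ∀ a, 0 < x a) (hxs : ∑ a, x a = 1)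
    (hv : ∀ a, v a = x a * Real.exp (-e * l a))
    (hq : q ∈ simplex A) (hmin : ∀ u ∈ simplex A, DF q v ≤ DF u v)
    (hy : ∀ a, y a = β * q a + (1 - β) * (1 / A))
    (hb : ∀ a, x a * l a * l a ≤ l a)
    (hs : s ∈ simplex A) :
    (∀ a, 0 < y a) ∧ ∑ a, y a = 1 ∧
    e * ∑ a, (x a - s a) * l a + (1 / β) * (-∑ a, s a * Real.log (y a)) ≤
      (-∑ a, s a * Real.log (x a)) + (1 / β - 1) * Real.log A
        + e ^ 2 / 2 * ∑ a, l a := by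
  have hApos : (0 : ℝ) < A := by exact_mod_cast hA
  have hvpos : ∀ a, 0 < v a := fun a => by rw [hv]; exact mul_pos (hx a) (Real.exp_pos _)
  have hZ : 0 < ∑ a, v a := Finset.sum_pos (fun a _ => hvpos a) ⟨⟨0, hA⟩, Finset.mem_univ _⟩
  have hqe := aux_min q v hvpos hZ hq hmin
  set Z := ∑ a, v a with hZdef
  have hqpos : ∀ a, 0 < q a := fun a => by rw [hqe]; exact div_pos (hvpos a) hZ
  have hβ' : 0 ≤ 1 - β := by linarith
  have hu : (0 : ℝ) < 1 / A := by positivity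
  have hypos : ∀ a, 0 < y a := fun a => by
    rw [hy]
    have := mul_pos hβ0 (hqpos a)
    have := mul_nonneg hβ' hu.le
    linarith
  refine ⟨hypos, ?_, ?_⟩
  · simp only [hy]
    rw [Finset.sum_add_distrib, ← Finset.mul_sum, hq.2]
    simp
    field_simp
    ring
  have hlogq : ∀ a, Real.log (q a) = Real.log (x a) - e * l a - Real.log Z := by
    intro a
    rw [hqe, Real.log_div (hvpos a).ne' hZ.ne', hv, Real.log_mul (hx a).ne' (Real.exp_pos _).ne',
      Real.log_exp]
    ring
  have hlogy : ∀ a, β * Real.log (q a) - (1 - β) * Real.log A ≤ Real.log (y a) := by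
    intro a
    have := strictConcaveOn_log_Ioi.concaveOn.2 (Set.mem_Ioi.2 (hqpos a)) (Set.mem_Ioi.2 hu)
      hβ0.le hβ' (by ring)
    simp only [smul_eq_mul] at this
    rw [← hy, one_div, Real.log_inv] at this
    linarith
  have hsum : β * (∑ a, s a * Real.log (x a) - e * ∑ a, s a * l a - Real.log Z)
      - (1 - β) * Real.log A ≤ ∑ a, s a * Real.log (y a) := by
    calc _ = ∑ a, s a * (β * Real.log (q a) - (1 - β) * Real.log A) := by
          have : ∀ a, s a * (β * Real.log (q a) - (1 - β) * Real.log A) =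
            β * (s a * Real.log (x a)) - β * e * (s a * l a) - s a * (β * Real.log Z)
              - s a * ((1 - β) * Real.log A) := fun a => by rw [hlogq]; ring
          simp only [this]
          rw [Finset.sum_sub_distrib, Finset.sum_sub_distrib, Finset.sum_sub_distrib,
            ← Finset.mul_sum, ← Finset.mul_sum, ← Finset.sum_mul, ← Finset.sum_mul, hs.2]
          ring
      _ ≤ _ := Finset.sum_le_sum fun a _ => mul_le_mul_of_nonneg_left (hlogy a) (hs.1 a)
  have hZle : Z ≤ 1 - e * ∑ a, x a * l a + e ^ 2 / 2 * ∑ a, l a := by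
    rw [hZdef, ← hxs, Finset.mul_sum, Finset.mul_sum, ← Finset.sum_sub_distrib,
      ← Finset.sum_add_distrib]
    refine Finset.sum_le_sum fun a _ => ?_
    have h1 := aux_exp (e * l a) (mul_nonneg he.le (hl a))
    have h2 := mul_le_mul_of_nonneg_left h1 (hx a).le
    have h3 := mul_le_mul_of_nonneg_left (hb a) (by positivity : 0 ≤ e ^ 2 / 2)
    rw [hv, neg_mul]
    linarith
  have hlogZ := Real.log_le_sub_one_of_pos hZ
  have hsum2 : ∑ a, (x a - s a) * l a = ∑ a, x a * l a - ∑ a, s a * l a := by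
    rw [← Finset.sum_sub_distrib]
    exact Finset.sum_congr rfl fun a _ => by ring
  have h6 := mul_le_mul_of_nonneg_left hsum (by positivity : 0 ≤ 1 / β)
  have h7 : 1 / β * (β * (∑ a, s a * Real.log (x a) - e * ∑ a, s a * l a - Real.log Z)
      - (1 - β) * Real.log A) = (∑ a, s a * Real.log (x a) - e * ∑ a, s a * l a - Real.log Z)
      - (1 / β - 1) * Real.log A := by
    field_simp
  rw [h7] at h6
  rw [hsum2]
  linarith

/-- Deterministic core of the high-probability OMD regret bound. -/
theorem stmt13 (A : ℕ) (hA : 1 ≤ A) (T : ℕ) (hT : 1 ≤ T)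
    (η w : ℕ → ℝ)
    (hη : ∀ i ∈ Finset.Icc 1 (T + 1), 0 < η i)
    (hw : ∀ i ∈ Finset.Icc 1 (T + 1), 0 < w i)
    (hβ : ∀ i ∈ Finset.Icc 1 T,
      0 < η (i + 1) * w i / (η i * w (i + 1)) ∧ η (i + 1) * w i / (η i * w (i + 1)) ≤ 1)
    (lhat : ℕ → Fin A → ℝ) (hl : ∀ i ∈ Finset.Icc 1 T, ∀ a, 0 ≤ lhat i a)
    (θ θtil θ' : ℕ → Fin A → ℝ)
    (hθ1 : ∀ a, θ 1 a = 1 / A)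
    (hθtil : ∀ i ∈ Finset.Icc 1 T, ∀ a,
      θtil (i + 1) a = θ i a * Real.exp (-(η i) * lhat i a))
    (hθ' : ∀ i ∈ Finset.Icc 1 T, θ' (i + 1) ∈ simplex A ∧
      ∀ u ∈ simplex A, DF (θ' (i + 1)) (θtil (i + 1)) ≤ DF u (θtil (i + 1)))
    (hθrec : ∀ i ∈ Finset.Icc 1 T,
      θ (i + 1) = (η (i + 1) * w i / (η i * w (i + 1))) • θ' (i + 1)
        + (1 - η (i + 1) * w i / (η i * w (i + 1))) • θ 1)
    (ai : ℕ → Fin A)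
    (hsupp : ∀ i ∈ Finset.Icc 1 T, ∀ a, a ≠ ai i → lhat i a = 0)
    (hbd : ∀ i ∈ Finset.Icc 1 T, θ i (ai i) * lhat i (ai i) ≤ 1) :
    ∀ θs ∈ simplex A, ∀ t ∈ Finset.Icc 1 T,
      (∑ i ∈ Finset.Icc 1 t, w i * ∑ a, (θ i a - θs a) * lhat i a) ≤
        w (t + 1) * Real.log A / η (t + 1)
          + (1 / 2) * ∑ i ∈ Finset.Icc 1 t, η i * w i * ∑ a, lhat i a := by
  intro θs hs t ht
  have hApos : (0 : ℝ) < A := by exact_mod_cast hA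
  have main : ∀ t, t ≤ T → (∀ a, 0 < θ (t + 1) a) ∧ ∑ a, θ (t + 1) a = 1 ∧
      (∑ i ∈ Finset.Icc 1 t, w i * ∑ a, (θ i a - θs a) * lhat i a)
        + w (t + 1) / η (t + 1) * (-∑ a, θs a * Real.log (θ (t + 1) a)) ≤
        w (t + 1) / η (t + 1) * Real.log A
          + (1 / 2) * ∑ i ∈ Finset.Icc 1 t, η i * w i * ∑ a, lhat i a := by
    intro t
    induction t with
    | zero =>
      intro _
      refine ⟨fun a => ?_, ?_, ?_⟩
      · rw [zero_add, hθ1]; positivity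
      · simp only [zero_add, hθ1]
        simp
        field_simp
      · simp only [zero_add, hθ1, ← Finset.sum_mul, hs.2]
        simp
    | succ n ih =>
      intro hn
      obtain ⟨hx, hxs, hI⟩ := ih (by omega)
      have hm : n + 1 ∈ Finset.Icc 1 T := Finset.mem_Icc.2 ⟨by omega, hn⟩
      have he := hη (n + 1) (Finset.mem_Icc.2 ⟨by omega, by omega⟩)
      have he2 := hη (n + 1 + 1) (Finset.mem_Icc.2 ⟨by omega, by omega⟩)
      have hw1 := hw (n + 1) (Finset.mem_Icc.2 ⟨by omega, by omega⟩)
      have hw2 := hw (n + 1 + 1) (Finset.mem_Icc.2 ⟨by omega, by omega⟩)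
      obtain ⟨y1, y2, y3⟩ := aux_step (θ (n + 1)) (θ (n + 1 + 1)) (θtil (n + 1 + 1))
        (θ' (n + 1 + 1)) (lhat (n + 1)) θs (η (n + 1)) _ he hA (hβ _ hm).1 (hβ _ hm).2 (hl _ hm)
        hx hxs (hθtil _ hm) (hθ' _ hm).1 (hθ' _ hm).2
        (fun a => by rw [hθrec _ hm]; simp [hθ1])
        (fun a => by
          by_cases h : a = ai (n + 1)
          · subst h
            have := mul_le_mul_of_nonneg_right (hbd _ hm) (hl _ hm (ai (n + 1)))
            linarith
          · simp [hsupp _ hm a h]) hs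
      refine ⟨y1, y2, ?_⟩
      rw [Finset.sum_Icc_succ_top (by omega), Finset.sum_Icc_succ_top (by omega)]
      have h := mul_le_mul_of_nonneg_left y3 (div_pos hw1 he).le
      generalize (∑ a, θs a * Real.log (θ (n + 1 + 1) a)) = G2 at *
      generalize (∑ a, θs a * Real.log (θ (n + 1) a)) = G1 at *
      generalize (∑ a, (θ (n + 1) a - θs a) * lhat (n + 1) a) = R at *
      generalize (∑ a, lhat (n + 1) a) = S at *
      have e1 : w (n + 1) / η (n + 1) *
          (η (n + 1) * R + 1 / (η (n + 1 + 1) * w (n + 1) / (η (n + 1) * w (n + 1 + 1))) * -G2)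
          = w (n + 1) * R + w (n + 1 + 1) / η (n + 1 + 1) * -G2 := by
        field_simp
      have e2 : w (n + 1) / η (n + 1) *
          (-G1 + (1 / (η (n + 1 + 1) * w (n + 1) / (η (n + 1) * w (n + 1 + 1))) - 1) * Real.log A
            + η (n + 1) ^ 2 / 2 * S)
          = w (n + 1) / η (n + 1) * -G1 + w (n + 1 + 1) / η (n + 1 + 1) * Real.log A
            - w (n + 1) / η (n + 1) * Real.log A + 1 / 2 * (η (n + 1) * w (n + 1) * S) := by
        field_simp
        ring
      rw [e1, e2] at h
      linarith
  obtain ⟨ht1, ht2⟩ := Finset.mem_Icc.1 ht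
  obtain ⟨hx, hxs, hI⟩ := main t ht2
  have hG : 0 ≤ -∑ a, θs a * Real.log (θ (t + 1) a) := by
    rw [neg_nonneg]
    refine Finset.sum_nonpos fun a _ => mul_nonpos_of_nonneg_of_nonpos (hs.1 a) ?_
    refine Real.log_nonpos (hx a).le ?_
    rw [← hxs]
    exact Finset.single_le_sum (fun b _ => (hx b).le) (Finset.mem_univ a)
  have hc : 0 < w (t + 1) / η (t + 1) :=
    div_pos (hw _ (Finset.mem_Icc.2 ⟨by omega, by omega⟩))
      (hη _ (Finset.mem_Icc.2 ⟨by omega, by omega⟩))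
  have := mul_nonneg hc.le hG
  rw [mul_div_right_comm]
  linarith
end
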